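/- Existence of a V-factorizable representative: for every density g on E^{V+W} there exists a V-factorizable density g̃ on E^{V+W} such that β_W(g̃) = β_W(g). -/

import Mathlib

open Finset
open scoped Classical

/-- Patterns over the integer interval `{A,...,B}` with values in `E`. -/
abbrev Pat (E : Type) (A B : ℤ) : Type := {x // x ∈ Finset.Icc A B} → E

/-- Evaluation of a pattern at an integer site (arbitrary value outside the domain). -/
noncomputable def ev {E : Type} [Nonempty E] {A B : ℤ} (φ : Pat E A B) (j : ℤ) : E :=
  if h : j ∈ Finset.Icc A B then φ ⟨j, h⟩ else Classical.arbitrary E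

/-- The window `σ_i(φ)|_V` of a pattern `φ`, a pattern on `V = {-p,...,q}`. -/
noncomputable def win {E : Type} [Nonempty E] (p q : ℕ) {A B : ℤ} (i : ℤ) (φ : Pat E A B) :
    Pat E (-(p : ℤ)) (q : ℤ) :=
  fun v => ev φ (i + v.1)

/-- A density on a finite type: nonnegative weights summing to one. -/
def IsDensity {α : Type} [Fintype α] (g : α → ℝ) : Prop :=
  (∀ x, 0 ≤ g x) ∧ ∑ x, g x = 1

/-- The distribution associated with a weight function, evaluated on an event. -/
noncomputable def Pr {α : Type} [Fintype α] (g : α → ℝ) (P : α → Prop) : ℝ :=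
  ∑ x, if P x then g x else 0

/-- Conditional probability `μ[P | Q] = μ[P ∩ Q]/μ[Q]` (`0` if `0/0`). -/
noncomputable def condPr {α : Type} [Fintype α] (g : α → ℝ) (P Q : α → Prop) : ℝ :=
  Pr g (fun x => P x ∧ Q x) / Pr g Q

/-- The marginalization operator `β_W`. -/
noncomputable def beta {E : Type} [Fintype E] [DecidableEq E] [Nonempty E]
    (p q : ℕ) (t u : ℤ) (g : Pat E (-(p : ℤ) - t) ((q : ℤ) + u) → ℝ) (i : ℤ)
    (ψ : Pat E (-(p : ℤ)) (q : ℤ)) : ℝ :=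
  Pr g (fun χ => win p q i χ = ψ)

/-- The reconstruction operator `α_{W,i}`. -/
noncomputable def alpha {E : Type} [Fintype E] [DecidableEq E] [Nonempty E]
    (p q : ℕ) (t u : ℤ) (g : ℤ → Pat E (-(p : ℤ)) (q : ℤ) → ℝ) (i : ℤ)
    (ψ : Pat E (-(p : ℤ) - t) ((q : ℤ) + u)) : ℝ :=
  (∏ k ∈ Finset.Icc (-t) (i - 1),
      condPr (g k) (fun χ => ev χ (-(p : ℤ)) = ev ψ (k + -(p : ℤ)))
        (fun χ => ∀ v ∈ Finset.Icc (-(p : ℤ) + 1) (q : ℤ), ev χ v = ev ψ (k + v))) *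
    g i (win p q i ψ) *
    (∏ l ∈ Finset.Icc (i + 1) u,
      condPr (g l) (fun χ => ev χ (q : ℤ) = ev ψ (l + (q : ℤ)))
        (fun χ => ∀ v ∈ Finset.Icc (-(p : ℤ)) ((q : ℤ) - 1), ev χ v = ev ψ (l + v)))

/-- Extendable de Bruijn densities. -/
def Extendable {E : Type} [Fintype E] [DecidableEq E] [Nonempty E]
    (p q : ℕ) (t u : ℤ) (g : ℤ → Pat E (-(p : ℤ)) (q : ℤ) → ℝ) : Prop :=
  ∀ i ∈ Finset.Icc (-t) u, ∀ φ, 0 < g i φ →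
    ∃ ψ : Pat E (-(p : ℤ) - t) ((q : ℤ) + u),
      win p q i ψ = φ ∧ ∀ j ∈ Finset.Icc (-t) u, 0 < g j (win p q j ψ)

/-- The event `{χ : χ|_S = ψ|_S}`. -/
def agreeOn {E : Type} [Nonempty E] {A B : ℤ} (S : Finset ℤ) (ψ χ : Pat E A B) : Prop :=
  ∀ j ∈ S, ev χ j = ev ψ j

/-!
Two nonnegative weights `μ` and `ν` on overlapping coordinate sets that have the same marginal `c`
on the overlap are glued by `μ * ν / c`, whose marginals are `μ` and `ν`. Sliding the window `V`
one step to the right from `i + V` to `i + 1 + V` overlaps all of the earlier windows only inside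
`i + V`, so the window marginals of `g` can be glued one after the other, and the resulting density
has the same window marginals as `g`. It is a product of window marginals divided by the marginals
on the overlaps of consecutive windows. The reconstruction operator with pivot `i` divides the
marginal of each other window by the one on its overlap towards `i`, which does not change the
product; so every pivot returns the glued density.
-/

section SumOut

variable {ι : Type*} [DecidableEq ι] {π : ι → Type*}

lemma apply_updateFinset_of_dependsOn {β : Type*} {f : (∀ i, π i) → β} {s : Set ι} {T : Finset ι}
    (hf : DependsOn f s) (hs : Disjoint s T) (x : ∀ i, π i) (y : ∀ i : T, π i) :
    f (Function.updateFinset x T y) = f x :=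
  hf fun _ hi => dif_neg (Set.disjoint_left.1 hs hi)

variable [∀ i, Fintype (π i)]

/-- The function obtained from `f` by summing over the coordinates in `T`: the counterpart of
`MeasureTheory.lmarginal` for counting measure and values in an additive commutative monoid. -/
def sumOut {M : Type*} [AddCommMonoid M] (T : Finset ι) (f : (∀ i, π i) → M) (x : ∀ i, π i) : M :=
  ∑ y : ∀ i : T, π i, f (Function.updateFinset x T y)

section AddCommMonoid

variable {M : Type*} [AddCommMonoid M] {S T : Finset ι} {f : (∀ i, π i) → M}

lemma sumOut_empty (f : (∀ i, π i) → M) : sumOut ∅ f = f := by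
  funext x
  simp [sumOut]

lemma sumOut_union (hST : Disjoint S T) (f : (∀ i, π i) → M) :
    sumOut (S ∪ T) f = sumOut S (sumOut T f) := by
  funext x
  simp only [sumOut, ← (Equiv.piFinsetUnion π hST).sum_comp, Fintype.sum_prod_type,
    Function.updateFinset_updateFinset hST]

lemma sumOut_updateFinset (f : (∀ i, π i) → M) (x : ∀ i, π i) (y : ∀ i : T, π i) :
    sumOut T f (Function.updateFinset x T y) = sumOut T f x := by
  simp only [sumOut, Function.updateFinset_updateFinset_of_subset subset_rfl]

lemma dependsOn_sumOut {s : Set ι} (hf : DependsOn f s) (T : Finset ι) :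
    DependsOn (sumOut T f) (s \ T) :=
  fun _ _ h => Finset.sum_congr rfl fun y _ => hf.updateFinset y h

variable [PartialOrder M] [IsOrderedAddMonoid M]

lemma sumOut_nonneg (hf : 0 ≤ f) (T : Finset ι) : 0 ≤ sumOut T f :=
  fun _ => Finset.sum_nonneg fun _ _ => hf _

lemma le_sumOut (hf : 0 ≤ f) (T : Finset ι) : f ≤ sumOut T f := by
  intro x
  calc
    f x = f (Function.updateFinset x T (T.restrict x)) := by
      rw [Function.updateFinset_restrict]
    _ ≤ sumOut T f x :=
      Finset.single_le_sum (f := fun y => f (Function.updateFinset x T y)) (fun _ _ => hf _)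
        (Finset.mem_univ _)

end AddCommMonoid

variable {K : Type*} [Field K] [LinearOrder K] [IsStrictOrderedRing K]
  {S T : Finset ι} {f g : (∀ i, π i) → K}

lemma sumOut_mul_div_sumOut {s : Set ι} (hf : 0 ≤ f) (hfs : DependsOn f s) (hsT : Disjoint s T)
    (hfg : sumOut S f = sumOut T g) : sumOut T (f * g / sumOut S f) = f := by
  funext x
  have hsum : sumOut T (f * g / sumOut S f) x = f x * sumOut T g x / sumOut T g x := by
    rw [hfg, sumOut]
    simp only [Pi.div_apply, Pi.mul_apply, sumOut_updateFinset,
      apply_updateFinset_of_dependsOn hfs hsT, ← Finset.sum_div, ← Finset.mul_sum]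
    rfl
  rw [hsum]
  -- Where the common marginal vanishes so does `f`, hence `0 / 0 = 0` is the right value there.
  refine mul_div_cancel_of_imp fun hzero => le_antisymm ?_ (hf x)
  rw [← hzero, ← hfg]
  exact le_sumOut hf S x

end SumOut

section PivotProd

variable {G : Type*} [DivisionCommMonoid G] (m c : ℤ → G)

/-- The product of the local factors `m k` for `k ∈ [a, u]`, each divided by the separator next to
it on the side of the pivot `i`; the separator between `k` and `k + 1` is `c k`. -/
noncomputable def pivotProd (a u i : ℤ) : G :=
  (∏ k ∈ Icc a (i - 1), m k / c k) * m i * ∏ l ∈ Icc (i + 1) u, m l / c (l - 1)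

variable {a u i : ℤ}

lemma pivotProd_add_one (ha : a ≤ i) (hu : i + 1 ≤ u) :
    pivotProd m c a u (i + 1) = pivotProd m c a u i := by
  have hleft : ∏ k ∈ Icc a i, m k / c k = m i / c i * ∏ k ∈ Icc a (i - 1), m k / c k := by
    rw [← insert_Icc_sub_one_right_eq_Icc ha, prod_insert (by simp)]
  have hright : ∏ l ∈ Icc (i + 1) u, m l / c (l - 1) =
      m (i + 1) / c i * ∏ l ∈ Icc (i + 1 + 1) u, m l / c (l - 1) := by
    rw [← insert_Icc_add_one_left_eq_Icc hu, prod_insert (by simp), add_sub_cancel_right]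
  rw [pivotProd, pivotProd, add_sub_cancel_right, hleft, hright, div_eq_mul_inv (m i),
    div_eq_mul_inv (m (i + 1))]
  ac_rfl

lemma pivotProd_eq_left (hi : i ∈ Icc a u) : pivotProd m c a u i = pivotProd m c a u a := by
  obtain ⟨ha, hu⟩ := mem_Icc.1 hi
  induction i, ha using Int.leInduction with
  | base => rfl
  | succ i ha ih =>
    rw [pivotProd_add_one m c ha hu, ih (mem_Icc.2 ⟨ha, by lia⟩) (by lia)]

lemma pivotProd_self (a : ℤ) : pivotProd m c a a a = m a := by
  simp [pivotProd]

lemma pivotProd_left_add_one (hau : a ≤ u) :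
    pivotProd m c a (u + 1) a = pivotProd m c a u a * m (u + 1) / c u := by
  have hright : ∏ l ∈ Icc (a + 1) (u + 1), m l / c (l - 1) =
      (∏ l ∈ Icc (a + 1) u, m l / c (l - 1)) * (m (u + 1) / c u) := by
    rw [← insert_Icc_right_eq_Icc_add_one (by lia), prod_insert (by simp), add_sub_cancel_right,
      mul_comm]
  rw [pivotProd, hright, ← mul_assoc, ← mul_div_assoc]
  rfl

end PivotProd

section ConsistentChain

variable {ι : Type*} [DecidableEq ι]

lemma biUnion_Icc_add_one (S : ℤ → Finset ι) {a r : ℤ} (har : a ≤ r) :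
    (Icc a (r + 1)).biUnion S = (Icc a r).biUnion S ∪ S (r + 1) := by
  rw [← insert_Icc_right_eq_Icc_add_one (by lia), biUnion_insert, union_comm]

variable {π : ι → Type*} [∀ i, Fintype (π i)]

/-- A chain of nonnegative local weights `m k` on the coordinates in `S k`, such that `m k` and
`m (k + 1)` have the same marginal `c k` on `S k ∩ S (k + 1)`, and such that the sets `S k` have
the running intersection property of a junction tree. -/
structure IsConsistentChain {M : Type*} [AddCommMonoid M] [PartialOrder M]
    (S : ℤ → Finset ι) (m c : ℤ → (∀ i, π i) → M) : Prop where
  nonneg (k : ℤ) : 0 ≤ m k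
  dependsOn (k : ℤ) : DependsOn (m k) (S k)
  sumOut_right (k : ℤ) : sumOut (S k \ S (k + 1)) (m k) = c k
  sumOut_left (k : ℤ) : sumOut (S (k + 1) \ S k) (m (k + 1)) = c k
  inter_subset {j k : ℤ} (hjk : j ≤ k) : S j ∩ S (k + 1) ⊆ S k

namespace IsConsistentChain

variable {S : ℤ → Finset ι} {a r : ℤ}

section AddCommMonoid

variable {M : Type*} [AddCommMonoid M] [PartialOrder M] {m c : ℤ → (∀ i, π i) → M}

lemma biUnion_inter_subset (h : IsConsistentChain S m c) :
    (Icc a r).biUnion S ∩ S (r + 1) ⊆ S r := by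
  rw [biUnion_inter]
  exact biUnion_subset.2 fun j hj => h.inter_subset (mem_Icc.1 hj).2

lemma dependsOn_separator (h : IsConsistentChain S m c) (k : ℤ) : DependsOn (c k) (S k) :=
  h.sumOut_right k ▸ (dependsOn_sumOut (h.dependsOn k) _).mono Set.sdiff_subset

lemma separator_nonneg [IsOrderedAddMonoid M] (h : IsConsistentChain S m c) (k : ℤ) : 0 ≤ c k :=
  h.sumOut_right k ▸ sumOut_nonneg (h.nonneg k) _

end AddCommMonoid

variable {K : Type*} [Field K]

lemma dependsOn_pivotProd [PartialOrder K] {m c : ℤ → (∀ i, π i) → K}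
    (h : IsConsistentChain S m c) (har : a ≤ r) :
    DependsOn (pivotProd m c a r a) ((Icc a r).biUnion S) := by
  induction r, har using Int.leInduction with
  | base => simpa [pivotProd_self] using h.dependsOn a
  | succ r har ih =>
    intro x y hxy
    rw [biUnion_Icc_add_one S har, coe_union] at hxy
    have hr : S r ⊆ (Icc a r).biUnion S := subset_biUnion_of_mem S (right_mem_Icc.2 har)
    simp only [pivotProd_left_add_one m c har, Pi.div_apply, Pi.mul_apply]
    rw [ih fun i hi => hxy i (.inl hi), h.dependsOn (r + 1) fun i hi => hxy i (.inr hi),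
      h.dependsOn_separator r fun i hi => hxy i (.inl (hr hi))]

variable [LinearOrder K] [IsStrictOrderedRing K] {m c : ℤ → (∀ i, π i) → K}

lemma pivotProd_nonneg (h : IsConsistentChain S m c) (har : a ≤ r) :
    0 ≤ pivotProd m c a r a := by
  induction r, har using Int.leInduction with
  | base => exact (pivotProd_self m c a).symm ▸ h.nonneg a
  | succ r har ih =>
    rw [pivotProd_left_add_one m c har]
    exact fun x => div_nonneg (mul_nonneg (ih x) (h.nonneg _ x)) (h.separator_nonneg r x)

lemma sumOut_pivotProd_add_one (h : IsConsistentChain S m c) (har : a ≤ r)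
    (hr : sumOut ((Icc a r).biUnion S \ S r) (pivotProd m c a r a) = m r) :
    sumOut (S (r + 1) \ (Icc a r).biUnion S) (pivotProd m c a (r + 1) a) = pivotProd m c a r a ∧
      sumOut ((Icc a r).biUnion S \ S (r + 1)) (pivotProd m c a (r + 1) a) = m (r + 1) := by
  have hdep := h.dependsOn_pivotProd har
  have hinter : (Icc a r).biUnion S ∩ S (r + 1) ⊆ S r := h.biUnion_inter_subset
  have hsub : S r ⊆ (Icc a r).biUnion S := subset_biUnion_of_mem S (right_mem_Icc.2 har)
  set U := (Icc a r).biUnion S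
  have hpast : sumOut (U \ S (r + 1)) (pivotProd m c a r a) = c r := by
    rw [show U \ S (r + 1) = (S r \ S (r + 1)) ∪ (U \ S r) by grind,
      sumOut_union (by grind [Finset.disjoint_left]), hr, h.sumOut_right]
  have hnew : sumOut (S (r + 1) \ U) (m (r + 1)) = c r := by
    rw [show S (r + 1) \ U = S (r + 1) \ S r by grind, h.sumOut_left]
  rw [pivotProd_left_add_one m c har]
  constructor
  · rw [← hpast]
    exact sumOut_mul_div_sumOut (h.pivotProd_nonneg har) hdep (disjoint_coe.2 disjoint_sdiff)
      (hpast.trans hnew.symm)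
  · rw [mul_comm, ← hnew]
    exact sumOut_mul_div_sumOut (h.nonneg (r + 1)) (h.dependsOn (r + 1))
      (disjoint_coe.2 disjoint_sdiff) (hnew.trans hpast.symm)

theorem sumOut_pivotProd (h : IsConsistentChain S m c) (har : a ≤ r) {j : ℤ} (hj : j ∈ Icc a r) :
    sumOut ((Icc a r).biUnion S \ S j) (pivotProd m c a r a) = m j := by
  induction r, har using Int.leInduction generalizing j with
  | base =>
    obtain rfl : j = a := by simpa using hj
    simp [pivotProd_self, sumOut_empty]
  | succ r har ih =>
    obtain ⟨hprev, hlast⟩ := h.sumOut_pivotProd_add_one har (ih (right_mem_Icc.2 har))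
    rw [biUnion_Icc_add_one S har]
    obtain rfl | hj : j = r + 1 ∨ j ∈ Icc a r := by grind
    · rw [union_sdiff_right, hlast]
    · have hsub : S j ⊆ (Icc a r).biUnion S := subset_biUnion_of_mem S hj
      have hsdiff : ((Icc a r).biUnion S ∪ S (r + 1)) \ S j =
          ((Icc a r).biUnion S \ S j) ∪ (S (r + 1) \ (Icc a r).biUnion S) := by
        grind
      rw [hsdiff, sumOut_union (disjoint_sdiff.mono_left sdiff_subset), hprev, ih hj]

end IsConsistentChain

end ConsistentChain

section CylinderPr

lemma Pr_pushforward {α β : Type} [Fintype α] [Fintype β] (h : α → ℝ) (f : α → β) (Q : β → Prop) :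
    Pr (fun y => Pr h fun x => f x = y) Q = Pr h fun x => Q (f x) := by
  simp only [Pr, ← Finset.sum_filter]
  rw [← sum_fiberwise_of_maps_to (s := univ.filter fun x => Q (f x)) (t := univ.filter Q) (g := f)
    (by simp)]
  refine Finset.sum_congr rfl fun y hy => Finset.sum_congr ?_ fun _ _ => rfl
  grind

variable {Ω : Type} [Fintype Ω] {ι : Type*} {π : ι → Type*}

/-- The probability, when `h` gives the weights of the outcomes, that the random field `X` agrees
with `x` on `S`. -/
noncomputable def cylinderPr (h : Ω → ℝ) (X : Ω → ∀ i, π i) (S : Finset ι) (x : ∀ i, π i) : ℝ :=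
  Pr h fun ω => ∀ j ∈ S, X ω j = x j

variable (h : Ω → ℝ) (X : Ω → ∀ i, π i)

lemma cylinderPr_nonneg (hh : 0 ≤ h) (S : Finset ι) : 0 ≤ cylinderPr h X S := by
  intro x
  refine Finset.sum_nonneg fun ω _ => ?_
  split_ifs
  exacts [hh ω, le_rfl]

lemma dependsOn_cylinderPr (S : Finset ι) : DependsOn (cylinderPr h X S) S := by
  intro x y hxy
  have hagree (ω : Ω) : (∀ j ∈ S, X ω j = x j) ↔ ∀ j ∈ S, X ω j = y j :=
    forall₂_congr fun j hj => by rw [hxy j hj]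
  simp only [cylinderPr, hagree]

variable [DecidableEq ι] [∀ i, Fintype (π i)]

lemma sumOut_sdiff_cylinderPr (S T : Finset ι) :
    sumOut (S \ T) (cylinderPr h X S) = cylinderPr h X (S ∩ T) := by
  funext x
  have hagree (ω : Ω) (y : ∀ i : ↥(S \ T), π i) :
      (∀ j ∈ S, X ω j = Function.updateFinset x (S \ T) y j) ↔
        (S \ T).restrict (X ω) = y ∧ ∀ j ∈ S ∩ T, X ω j = x j := by
    simp only [funext_iff, Subtype.forall, Finset.restrict, Function.updateFinset]
    grind
  simp only [sumOut, cylinderPr, Pr, hagree]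
  rw [Finset.sum_comm]
  simp [ite_and]

lemma isConsistentChain_cylinderPr (hh : 0 ≤ h) {S : ℤ → Finset ι}
    (hS : ∀ {j k : ℤ}, j ≤ k → S j ∩ S (k + 1) ⊆ S k) :
    IsConsistentChain S (fun k => cylinderPr h X (S k))
      (fun k => cylinderPr h X (S k ∩ S (k + 1))) where
  nonneg k := cylinderPr_nonneg h X hh (S k)
  dependsOn k := dependsOn_cylinderPr h X (S k)
  sumOut_right k := sumOut_sdiff_cylinderPr h X (S k) (S (k + 1))
  sumOut_left k := by rw [sumOut_sdiff_cylinderPr, inter_comm]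
  inter_subset := hS

end CylinderPr

section Patterns

variable {E : Type} [Nonempty E] {A B : ℤ}

lemma ev_coe (φ : Pat E A B) (v : {x // x ∈ Icc A B}) : ev φ v = φ v :=
  dif_pos v.2

lemma ev_win (p q : ℕ) (k : ℤ) (χ : Pat E A B) {v : ℤ} (hv : v ∈ Icc (-(p : ℤ)) (q : ℤ)) :
    ev (win p q k χ) v = ev χ (k + v) :=
  dif_pos hv

/-- The translated window `k + V`, for `V = {-p,...,q}`. -/
noncomputable def window (p q : ℕ) (k : ℤ) : Finset ℤ :=
  Icc (k - p) (k + q)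

lemma window_inter_window_add_one (p q : ℕ) (k : ℤ) :
    window p q k ∩ window p q (k + 1) = Icc (k + 1 - p) (k + q) := by
  ext j
  simp only [window, mem_inter, mem_Icc]
  lia

lemma window_inter_window_subset (p q : ℕ) {j k : ℤ} (hjk : j ≤ k) :
    window p q j ∩ window p q (k + 1) ⊆ window p q k := by
  intro v
  simp only [window, mem_inter, mem_Icc]
  lia

lemma biUnion_window (p q : ℕ) {t u : ℤ} (htu : -t ≤ u) :
    (Icc (-t) u).biUnion (window p q) = Icc (-(p : ℤ) - t) (q + u) := by
  ext j
  simp only [window, mem_biUnion, mem_Icc]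
  constructor
  · rintro ⟨k, hk, hj⟩
    lia
  · intro hj
    exact ⟨max (-t) (j - q), by lia, by lia⟩

lemma image_add_left_Icc_eq_window (p q : ℕ) (k : ℤ) :
    (Icc (-(p : ℤ)) q).image (k + ·) = window p q k := by
  rw [image_add_left_Icc, window, sub_eq_add_neg]

variable [Fintype E]

lemma cylinderPr_ev_Icc (h : Pat E A B → ℝ) (x : ℤ → E) :
    cylinderPr h ev (Icc A B) x = h ((Icc A B).restrict x) := by
  have hagree (χ : Pat E A B) : (∀ j ∈ Icc A B, ev χ j = x j) ↔ χ = (Icc A B).restrict x := by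
    rw [funext_iff, Subtype.forall]
    exact forall₂_congr fun j hj => by rw [ev_coe χ ⟨j, hj⟩, restrict]
  simp only [cylinderPr, Pr, hagree, Finset.sum_ite_eq', Finset.mem_univ, if_true]

lemma cylinderPr_comp_ev {F : (ℤ → E) → ℝ} (hF : DependsOn F (Icc A B)) {S : Finset ℤ}
    (hS : S ⊆ Icc A B) :
    cylinderPr (fun ψ : Pat E A B => F (ev ψ)) ev S = sumOut (Icc A B \ S) F := by
  have hfull : cylinderPr (fun ψ : Pat E A B => F (ev ψ)) ev (Icc A B) = F := by
    funext x
    rw [cylinderPr_ev_Icc]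
    exact hF fun j hj => ev_coe _ ⟨j, hj⟩
  calc
    _ = cylinderPr (fun ψ : Pat E A B => F (ev ψ)) ev (Icc A B ∩ S) := by rw [inter_eq_right.2 hS]
    _ = sumOut (Icc A B \ S) F := by rw [← sumOut_sdiff_cylinderPr, hfull]

lemma isConsistentChain_window (p q : ℕ) (h : Pat E A B → ℝ) (hh : 0 ≤ h) :
    IsConsistentChain (window p q) (fun k => cylinderPr h ev (window p q k))
      (fun k => cylinderPr h ev (window p q k ∩ window p q (k + 1))) :=
  isConsistentChain_cylinderPr h ev hh (window_inter_window_subset p q)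

end Patterns

section BetaAlpha

variable {E : Type} [Fintype E] [DecidableEq E] [Nonempty E] (p q : ℕ) (t u : ℤ)
  (g : Pat E (-(p : ℤ) - t) ((q : ℤ) + u) → ℝ)

lemma sum_beta (k : ℤ) : ∑ φ, beta p q t u g k φ = ∑ χ, g χ := by
  simpa [Pr, beta] using Pr_pushforward g (win p q k) fun _ => True

lemma cylinderPr_beta {S : Finset ℤ} (hS : S ⊆ Icc (-(p : ℤ)) q) (k : ℤ) (x : ℤ → E) :
    cylinderPr (beta p q t u g k) ev S (fun v => x (k + v)) =
      cylinderPr g ev (S.image (k + ·)) x := by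
  have hagree (χ : Pat E (-(p : ℤ) - t) ((q : ℤ) + u)) :
      (∀ v ∈ S, ev (win p q k χ) v = x (k + v)) ↔ ∀ j ∈ S.image (k + ·), ev χ j = x j := by
    rw [forall_mem_image]
    exact forall₂_congr fun v hv => by rw [ev_win p q k χ (hS hv)]
  simp only [cylinderPr, ← hagree]
  exact Pr_pushforward g (win p q k) fun χ => ∀ v ∈ S, ev χ v = x (k + v)

lemma cylinderPr_window (k : ℤ) (x : ℤ → E) :
    cylinderPr g ev (window p q k) x = beta p q t u g k fun v => x (k + v) := by
  rw [← image_add_left_Icc_eq_window, ← cylinderPr_beta p q t u g subset_rfl, cylinderPr_ev_Icc]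
  rfl

lemma beta_congr_of_cylinderPr_window {g' : Pat E (-(p : ℤ) - t) ((q : ℤ) + u) → ℝ} {k : ℤ}
    (h : cylinderPr g ev (window p q k) = cylinderPr g' ev (window p q k)) :
    beta p q t u g k = beta p q t u g' k := by
  funext φ
  have hφ : (fun v : {v // v ∈ Icc (-(p : ℤ)) (q : ℤ)} => ev φ (k + v - k)) = φ := by
    funext v
    rw [add_sub_cancel_left, ev_coe]
  simpa only [cylinderPr_window, hφ] using congrFun h fun j => ev φ (j - k)

lemma condPr_beta {v : ℤ} {S : Finset ℤ} (hS : insert v S ⊆ Icc (-(p : ℤ)) q) (k : ℤ)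
    (x : ℤ → E) :
    condPr (beta p q t u g k) (fun χ => ev χ v = x (k + v))
        (fun χ => ∀ w ∈ S, ev χ w = x (k + w)) =
      cylinderPr g ev ((insert v S).image (k + ·)) x / cylinderPr g ev (S.image (k + ·)) x := by
  rw [← cylinderPr_beta p q t u g hS, ← cylinderPr_beta p q t u g ((subset_insert v S).trans hS)]
  simp only [condPr, cylinderPr, forall_mem_insert]

lemma condPr_beta_left (k : ℤ) (x : ℤ → E) :
    condPr (beta p q t u g k) (fun χ => ev χ (-(p : ℤ)) = x (k + -(p : ℤ)))
        (fun χ => ∀ v ∈ Icc (-(p : ℤ) + 1) (q : ℤ), ev χ v = x (k + v)) =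
      cylinderPr g ev (window p q k) x /
        cylinderPr g ev (window p q k ∩ window p q (k + 1)) x := by
  have hV : insert (-(p : ℤ)) (Icc (-(p : ℤ) + 1) q) = Icc (-(p : ℤ)) q :=
    insert_Icc_add_one_left_eq_Icc (by lia)
  rw [condPr_beta p q t u g hV.subset, hV, image_add_left_Icc_eq_window, image_add_left_Icc,
    window_inter_window_add_one]
  congr 3
  ring

lemma condPr_beta_right (k : ℤ) (x : ℤ → E) :
    condPr (beta p q t u g k) (fun χ => ev χ (q : ℤ) = x (k + (q : ℤ)))
        (fun χ => ∀ v ∈ Icc (-(p : ℤ)) ((q : ℤ) - 1), ev χ v = x (k + v)) =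
      cylinderPr g ev (window p q k) x /
        cylinderPr g ev (window p q (k - 1) ∩ window p q (k - 1 + 1)) x := by
  have hV : insert (q : ℤ) (Icc (-(p : ℤ)) (q - 1)) = Icc (-(p : ℤ)) q :=
    insert_Icc_sub_one_right_eq_Icc (by lia)
  rw [condPr_beta p q t u g hV.subset, hV, image_add_left_Icc_eq_window, image_add_left_Icc,
    window_inter_window_add_one]
  congr 3 <;> ring

lemma alpha_beta (i : ℤ) (ψ : Pat E (-(p : ℤ) - t) ((q : ℤ) + u)) :
    alpha p q t u (beta p q t u g) i ψ =
      pivotProd (fun k => cylinderPr g ev (window p q k))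
        (fun k => cylinderPr g ev (window p q k ∩ window p q (k + 1))) (-t) u i (ev ψ) := by
  have hi : beta p q t u g i (win p q i ψ) = cylinderPr g ev (window p q i) (ev ψ) :=
    (cylinderPr_window p q t u g i (ev ψ)).symm
  simp only [alpha, condPr_beta_left, condPr_beta_right, hi, pivotProd, Pi.mul_apply,
    Finset.prod_apply, Pi.div_apply]

lemma alpha_congr {b b' : ℤ → Pat E (-(p : ℤ)) (q : ℤ) → ℝ}
    (hb : ∀ j ∈ Icc (-t) u, b j = b' j) {i : ℤ} (hi : i ∈ Icc (-t) u) :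
    alpha p q t u b i = alpha p q t u b' i := by
  obtain ⟨hti, hiu⟩ := mem_Icc.1 hi
  funext ψ
  rw [alpha, alpha, hb i hi]
  congr 1
  · congr 1
    refine Finset.prod_congr rfl fun k hk => ?_
    rw [hb k (Icc_subset_Icc le_rfl (by lia) hk)]
  · refine Finset.prod_congr rfl fun l hl => ?_
    rw [hb l (Icc_subset_Icc (by lia) le_rfl hl)]

lemma alpha_beta_nonneg (htu : -t ≤ u) (hg : 0 ≤ g) : 0 ≤ alpha p q t u (beta p q t u g) (-t) := by
  intro ψ
  rw [alpha_beta]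
  exact (isConsistentChain_window p q g hg).pivotProd_nonneg htu (ev ψ)

lemma alpha_beta_eq_left {i : ℤ} (hi : i ∈ Icc (-t) u) :
    alpha p q t u (beta p q t u g) i = alpha p q t u (beta p q t u g) (-t) := by
  funext ψ
  rw [alpha_beta, alpha_beta, pivotProd_eq_left _ _ hi]

theorem beta_alpha_beta (hg : 0 ≤ g) {j : ℤ} (hj : j ∈ Icc (-t) u) :
    beta p q t u (alpha p q t u (beta p q t u g) (-t)) j = beta p q t u g j := by
  have htu : -t ≤ u := (mem_Icc.1 hj).1.trans (mem_Icc.1 hj).2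
  have hchain := isConsistentChain_window p q g hg
  have hdep := hchain.dependsOn_pivotProd htu
  have hmarg := hchain.sumOut_pivotProd htu hj
  have hsub : window p q j ⊆ (Icc (-t) u).biUnion (window p q) := subset_biUnion_of_mem _ hj
  rw [biUnion_window p q htu] at hdep hmarg hsub
  refine beta_congr_of_cylinderPr_window p q t u _ ?_
  rw [funext (alpha_beta p q t u g (-t)), cylinderPr_comp_ev hdep hsub, hmarg]

end BetaAlpha

/-- existence of a `V`-factorizable representative. -/
theorem stmt_8
    (E : Type) [Fintype E] [DecidableEq E] [Nonempty E]
    (p q : ℕ) (t u : ℤ) (htu : -t ≤ u)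
    (g : Pat E (-(p : ℤ) - t) ((q : ℤ) + u) → ℝ) (hg : IsDensity g) :
    ∃ gtil : Pat E (-(p : ℤ) - t) ((q : ℤ) + u) → ℝ,
      IsDensity gtil ∧
      (∀ i ∈ Finset.Icc (-t) u, alpha p q t u (beta p q t u gtil) i = gtil) ∧
      (∀ j ∈ Finset.Icc (-t) u, beta p q t u gtil j = beta p q t u g j) := by
  have hβ : ∀ j ∈ Finset.Icc (-t) u,
      beta p q t u (alpha p q t u (beta p q t u g) (-t)) j = beta p q t u g j :=
    fun _ hj => beta_alpha_beta p q t u g hg.1 hj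
  refine ⟨alpha p q t u (beta p q t u g) (-t), ⟨alpha_beta_nonneg p q t u g htu hg.1, ?_⟩, ?_, hβ⟩
  · rw [← sum_beta p q t u _ (-t), hβ (-t) (left_mem_Icc.2 htu), sum_beta, hg.2]
  · intro i hi
    rw [alpha_congr p q t u hβ hi, alpha_beta_eq_left p q t u g hi]
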